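/- Let p be a positive pmf on {1,2}^4 (four binary variables X1, X2, X3, X4) satisfying (X2,X4) ⊥ X1. Write q_2 = P(X2=1), q_4 = P(X4=1), q_{24} = P(X2=1, X4=1), and for i ∈ {1,2}: q_{3|i} = P(X3=1 | X1=i), q_{23|i} = P(X2=1, X3=1 | X1=i), q_{34|i} = P(X3=1, X4=1 | X1=i), q_{234|i} = P(X2=1, X3=1, X4=1 | X1=i). Then X2 ⊥ X4 | (X1,X3) if and only if for i = 1, 2 both: q_{23|i} · q_{34|i} = q_{3|i} · q_{234|i}, and q_{3|i} · q_{24} − q_{23|i} · q_4 − q_{34|i} · q_2 + q_{234|i} = q_{24} − q_2 · q_4. (Equations (5.6) and (5.7): the binary specialization of Proposition 14.) -/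

import Mathlib

open Finset

section

/- Four binary variables with states `{1, 2}` encoded as `Fin 2 = {0, 1}`; the state `1`
of the paper is `0` and the state `2` is `1`. -/

/-- `P(X1 = i)`. -/
noncomputable def pX1 (p : Fin 2 × Fin 2 × Fin 2 × Fin 2 → ℝ) (i : Fin 2) : ℝ :=
  ∑ j, ∑ k, ∑ l, p (i, j, k, l)

/-- `q₂ = P(X2 = 1)`. -/
noncomputable def q2 (p : Fin 2 × Fin 2 × Fin 2 × Fin 2 → ℝ) : ℝ :=
  ∑ i, ∑ k, ∑ l, p (i, 0, k, l)

/-- `q₄ = P(X4 = 1)`. -/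
noncomputable def q4 (p : Fin 2 × Fin 2 × Fin 2 × Fin 2 → ℝ) : ℝ :=
  ∑ i, ∑ j, ∑ k, p (i, j, k, 0)

/-- `q₂₄ = P(X2 = 1, X4 = 1)`. -/
noncomputable def q24 (p : Fin 2 × Fin 2 × Fin 2 × Fin 2 → ℝ) : ℝ :=
  ∑ i, ∑ k, p (i, 0, k, 0)

/-- `q₃|ᵢ = P(X3 = 1 | X1 = i)`. -/
noncomputable def q3c (p : Fin 2 × Fin 2 × Fin 2 × Fin 2 → ℝ) (i : Fin 2) : ℝ :=
  (∑ j, ∑ l, p (i, j, 0, l)) / pX1 p i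

/-- `q₂₃|ᵢ = P(X2 = 1, X3 = 1 | X1 = i)`. -/
noncomputable def q23c (p : Fin 2 × Fin 2 × Fin 2 × Fin 2 → ℝ) (i : Fin 2) : ℝ :=
  (∑ l, p (i, 0, 0, l)) / pX1 p i

/-- `q₃₄|ᵢ = P(X3 = 1, X4 = 1 | X1 = i)`. -/
noncomputable def q34c (p : Fin 2 × Fin 2 × Fin 2 × Fin 2 → ℝ) (i : Fin 2) : ℝ :=
  (∑ j, p (i, j, 0, 0)) / pX1 p i

/-- `q₂₃₄|ᵢ = P(X2 = 1, X3 = 1, X4 = 1 | X1 = i)`. -/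
noncomputable def q234c (p : Fin 2 × Fin 2 × Fin 2 × Fin 2 → ℝ) (i : Fin 2) : ℝ :=
  p (i, 0, 0, 0) / pX1 p i

/-- Real-number core of the statement for a fixed value of `X1`. -/
theorem core_aux (a b c d e f g h M Q24 Q2 Q4 : ℝ) (hM : 0 < M)
    (hs : M = a + b + c + d + e + f + g + h) (h24 : a + e = Q24 * M)
    (h2 : a + b + e + f = Q2 * M) (h4 : a + c + e + g = Q4 * M) :
    (a * d = b * c ∧ e * h = f * g) ↔
    ((a + b) / M * ((a + c) / M) = (a + b + c + d) / M * (a / M) ∧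
      (a + b + c + d) / M * Q24 - (a + b) / M * Q4 - (a + c) / M * Q2 + a / M
        = Q24 - Q2 * Q4) := by
  have hM' : M ≠ 0 := hM.ne'
  have e24 : Q24 = (a + e) / M := by rw [h24]; field_simp
  have e2 : Q2 = (a + b + e + f) / M := by rw [h2]; field_simp
  have e4 : Q4 = (a + c + e + g) / M := by rw [h4]; field_simp
  have k1 : (a + b) / M * ((a + c) / M) - (a + b + c + d) / M * (a / M)
      = (b * c - a * d) / M ^ 2 := by
    field_simp; ring
  have k2 : (a + b + c + d) / M * Q24 - (a + b) / M * Q4 - (a + c) / M * Q2 + a / M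
        - (Q24 - Q2 * Q4) = ((a * d - b * c) - (e * h - f * g)) / M ^ 2 := by
    rw [e24, e2, e4]
    field_simp
    rw [hs]
    ring
  rw [← sub_eq_zero (b := (a + b + c + d) / M * (a / M)), k1,
    ← sub_eq_zero (b := Q24 - Q2 * Q4), k2]
  have hM2 : M ^ 2 ≠ 0 := pow_ne_zero _ hM'
  simp only [div_eq_zero_iff, hM2, or_false]
  constructor
  · rintro ⟨u, v⟩
    constructor <;> linarith
  · rintro ⟨u, v⟩
    constructor <;> linarith

/-- equations (5.6) and (5.7); binary Proposition 14: for a positive pmf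
`p` on `{1,2}⁴` with `(X2, X4) ⊥ X1`, the conditional independence `X2 ⊥ X4 | (X1, X3)`
holds if and only if for `i = 1, 2` both
`q₂₃|ᵢ q₃₄|ᵢ = q₃|ᵢ q₂₃₄|ᵢ` and
`q₃|ᵢ q₂₄ − q₂₃|ᵢ q₄ − q₃₄|ᵢ q₂ + q₂₃₄|ᵢ = q₂₄ − q₂ q₄`. -/
theorem binary_prop14 (p : Fin 2 × Fin 2 × Fin 2 × Fin 2 → ℝ)
    (hp0 : ∀ s, 0 < p s) (hp1 : ∑ s, p s = 1)
    -- (X2, X4) ⊥ X1 : p₁₂₄(i, j, l) = p₂₄(j, l) · p₁(i)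
    (hind : ∀ i j l, (∑ k, p (i, j, k, l))
        = (∑ i', ∑ k, p (i', j, k, l)) * pX1 p i) :
    -- X2 ⊥ X4 | (X1, X3)
    (∀ i j k l, p (i, j, k, l) * (∑ j', ∑ l', p (i, j', k, l'))
        = (∑ l', p (i, j, k, l')) * (∑ j', p (i, j', k, l)))
    ↔ (∀ i : Fin 2,
        q23c p i * q34c p i = q3c p i * q234c p i ∧
        q3c p i * q24 p - q23c p i * q4 p - q34c p i * q2 p + q234c p i
          = q24 p - q2 p * q4 p) := by
  have hM : ∀ i, 0 < pX1 p i := fun i => by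
    simp only [pX1, Fin.sum_univ_two]
    have := fun j k l => hp0 (i, j, k, l)
    linarith [this 0 0 0, this 0 0 1, this 0 1 0, this 0 1 1,
      this 1 0 0, this 1 0 1, this 1 1 0, this 1 1 1]
  have key := fun i => core_aux (p (i,0,0,0)) (p (i,0,0,1)) (p (i,1,0,0)) (p (i,1,0,1))
    (p (i,0,1,0)) (p (i,0,1,1)) (p (i,1,1,0)) (p (i,1,1,1)) (pX1 p i) (q24 p) (q2 p) (q4 p)
    (hM i) (by simp only [pX1, Fin.sum_univ_two]; ring)
    (by
      have h1 := hind i 0 0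
      simp only [q24, Fin.sum_univ_two] at h1 ⊢
      linarith)
    (by
      have h1 := hind i 0 0
      have h2 := hind i 0 1
      simp only [q2, Fin.sum_univ_two] at h1 h2 ⊢
      linarith)
    (by
      have h1 := hind i 0 0
      have h2 := hind i 1 0
      simp only [q4, Fin.sum_univ_two] at h1 h2 ⊢
      linarith)
  refine forall_congr' fun i => ?_
  have key := key i
  simp only [q3c, q23c, q34c, q234c, Fin.sum_univ_two, ← add_assoc] at key ⊢
  rw [← key]
  constructor
  · intro h
    have h0 := h 0 0 0
    have h1 := h 0 1 0
    constructor <;> linarith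
  · rintro ⟨u, v⟩ j k l
    fin_cases j <;> fin_cases k <;> fin_cases l <;> simp <;> linarith


end
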